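/- arXiv:2009.06362 — 2 statements merged into one kernel-verified Lean document; each statement's English description precedes it below -/
import Mathlib

section
/- One-step divergence identity for Newton tensors of the augmented Hessian (identity (18), proved within Lemma 3.1). Let Ω ⊆ ℝⁿ be a domain with n ≥ 3, let u ∈ C³(Ω), let H : Ω×ℝ×ℝⁿ → Sym_n(ℝ) be C¹, and let 1 ≤ k ≤ n−1. Then at every point of Ω and for every index j, Σ_i ∂_i(T_k(A_H[u])^{ij}) = Σ_{i,l} T_{k−1}(A_H[u])^{il} · (∂_i((H[u])_{lj}) − ∂_j((H[u])_{il})) − Σ_{i,l} ∂_i(T_{k−1}(A_H[u])^{il}) · (A_H[u])_{lj}, where ∂_i denotes the i-th partial derivative of the indicated composite function of x. -/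
open MeasureTheory Metric Set Matrix

noncomputable section

/-- The `k`-th elementary symmetric polynomial of the eigenvalues of an `n × n` real
matrix, defined via the coefficients of the characteristic polynomial. -/
def esymmMat {n : ℕ} (k : ℕ) (A : Matrix (Fin n) (Fin n) ℝ) : ℝ :=
  (-1 : ℝ) ^ k * A.charpoly.coeff (n - k)

/-- `λ(A) ∈ Γ_k^+`, i.e. `σ_j(A) > 0` for all `1 ≤ j ≤ k`. -/
def GammaPlus {n : ℕ} (k : ℕ) (A : Matrix (Fin n) (Fin n) ℝ) : Prop :=
  ∀ j : ℕ, 1 ≤ j → j ≤ k → 0 < esymmMat j A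

/-- The Newton tensors `T_0(A) = I`, `T_j(A) = σ_j(A) I - T_{j-1}(A) A`. -/
def newtonT {n : ℕ} : ℕ → Matrix (Fin n) (Fin n) ℝ → Matrix (Fin n) (Fin n) ℝ
  | 0, _ => 1
  | (j + 1), A => esymmMat (j + 1) A • (1 : Matrix (Fin n) (Fin n) ℝ) - newtonT j A * A

/-- `i`-th partial derivative. -/
def pd {n : ℕ} (i : Fin n) (w : (Fin n → ℝ) → ℝ) (x : Fin n → ℝ) : ℝ :=
  fderiv ℝ w x (Pi.single i 1)

/-- Gradient as a vector. -/
def grad {n : ℕ} (w : (Fin n → ℝ) → ℝ) (x : Fin n → ℝ) : Fin n → ℝ :=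
  fun i => pd i w x

/-- Hessian matrix. -/
def hess {n : ℕ} (w : (Fin n → ℝ) → ℝ) (x : Fin n → ℝ) : Matrix (Fin n) (Fin n) ℝ :=
  Matrix.of fun i j => pd i (pd j w) x

/-- Squared Euclidean norm of a vector. -/
def normSq {n : ℕ} (ξ : Fin n → ℝ) : ℝ := ∑ i, ξ i ^ 2

/-- Euclidean norm of a vector. -/
def vnorm {n : ℕ} (ξ : Fin n → ℝ) : ℝ := Real.sqrt (∑ i, ξ i ^ 2)

/-- Operator norm of a matrix, viewed as a linear map between Euclidean spaces. -/
def matNorm {n : ℕ} (M : Matrix (Fin n) (Fin n) ℝ) : ℝ :=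
  ‖LinearMap.toContinuousLinearMap (Matrix.toEuclideanLin M)‖

/-- Laplacian. -/
def lapl {n : ℕ} (w : (Fin n → ℝ) → ℝ) (x : Fin n → ℝ) : ℝ := ∑ l, pd l (pd l w) x

/-- `W^{2,p}` norm (with classical derivatives) on a set. -/
def W2pNorm {n : ℕ} (p : ℝ) (w : (Fin n → ℝ) → ℝ) (B : Set (Fin n → ℝ)) : ℝ :=
  (∫ x in B, (|w x| ^ p + vnorm (grad w x) ^ p + matNorm (hess w x) ^ p)) ^ (1 / p)

/-- `C^{1,1}_loc` on a set: continuously differentiable with locally Lipschitz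
first derivatives. -/
def C11On {E F : Type*} [NormedAddCommGroup E] [NormedSpace ℝ E]
    [NormedAddCommGroup F] [NormedSpace ℝ F] (f : E → F) (s : Set E) : Prop :=
  ContDiffOn ℝ 1 f s ∧
    ∀ x ∈ s, ∃ (K : NNReal) (t : Set E), t ∈ nhdsWithin x s ∧
      LipschitzOnWith K (fderivWithin ℝ f s) t

/-- First order difference quotient `∇_l^h`. -/
def dq {n : ℕ} (l : Fin n) (h : ℝ) (w : (Fin n → ℝ) → ℝ) (x : Fin n → ℝ) : ℝ :=
  (w (x + h • (Pi.single l 1 : Fin n → ℝ)) - w x) / h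

/-- Second order difference quotient `Δ_{ll}^h`. -/
def ddq {n : ℕ} (l : Fin n) (h : ℝ) (w : (Fin n → ℝ) → ℝ) (x : Fin n → ℝ) : ℝ :=
  (w (x + h • (Pi.single l 1 : Fin n → ℝ)) - 2 * w x + w (x - h • (Pi.single l 1 : Fin n → ℝ))) / h ^ 2

/-- `L^s` seminorm (as an extended real number) of a function on a set. -/
def lpN {n : ℕ} (s : ℝ) (w : (Fin n → ℝ) → ℝ) (S : Set (Fin n → ℝ)) : ENNReal :=
  (∫⁻ x in S, ENNReal.ofReal (|w x| ^ s)) ^ (1 / s)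

end

/-!
Write `adj(X - A) = ∑ X ^ m B_m` with matrix coefficients. Comparing coefficients in
`adj(X - A) (X - A) = χ_A(X) I` shows that `B_m` obeys the recursion defining the Newton tensors, so
`B_{n-1-k} = (-1) ^ k T_k(A)`. Jacobi's formula `d det M = tr(adj(M) dM)` at `M = t I - A` then
gives, coefficient by coefficient in `t`, the key identity `dσ_{k+1}(A) = tr(T_k(A) dA)`.

Taking the divergence of `T_{k+1} = σ_{k+1} I - T_k A` with this identity produces
`∑ T_k^{il} (∂_j A_{li} - ∂_i A_{lj}) - ∑ ∂_i T_k^{il} A_{lj}`. For `A = ∇²u - G` with `G` symmetric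
the third derivatives of `u` cancel in the first sum, leaving `∂_i G_{lj} - ∂_j G_{il}`.
-/

open scoped Topology

theorem sum_vandermonde_inv_smul {K M : Type*} [Field K] [AddCommGroup M] [Module K M] {N : ℕ}
    {t : Fin N → K} (ht : Function.Injective t) (d : Fin N → M) (m : Fin N) :
    ∑ s, (vandermonde t)⁻¹ m s • ∑ l : Fin N, t s ^ (l : ℕ) • d l = d m := by
  have hinv : (vandermonde t)⁻¹ * vandermonde t = 1 :=
    nonsing_inv_mul _ (det_vandermonde_ne_zero_iff.2 ht).isUnit
  simp_rw [Finset.smul_sum, smul_smul]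
  rw [Finset.sum_comm]
  simp_rw [← Finset.sum_smul, ← vandermonde_apply, ← mul_apply, hinv]
  simp [one_apply]

theorem hasFDerivAt_of_hasFDerivAt_sum_pow_smul {𝕜 E F : Type*} [NontriviallyNormedField 𝕜]
    [NormedAddCommGroup E] [NormedSpace 𝕜 E] [NormedAddCommGroup F] [NormedSpace 𝕜 F] {N : ℕ}
    {c : Fin N → E → F} {c' : Fin N → E →L[𝕜] F} {x : E}
    (h : ∀ t : 𝕜, HasFDerivAt (fun y => ∑ m : Fin N, t ^ (m : ℕ) • c m y)
      (∑ m : Fin N, t ^ (m : ℕ) • c' m) x)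
    (m : Fin N) : HasFDerivAt (c m) (c' m) x := by
  have : Infinite 𝕜 := NontriviallyNormedField.infinite 𝕜
  -- A Vandermonde matrix recovers the coefficients from the values at `N` distinct points.
  let t : Fin N → 𝕜 := fun s => Infinite.natEmbedding 𝕜 s
  have ht : Function.Injective t := (Infinite.natEmbedding 𝕜).injective.comp Fin.val_injective
  have hc : HasFDerivAt
      (fun y => ∑ s, (vandermonde t)⁻¹ m s • ∑ l : Fin N, t s ^ (l : ℕ) • c l y)
      (∑ s, (vandermonde t)⁻¹ m s • ∑ l : Fin N, t s ^ (l : ℕ) • c' l) x :=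
    HasFDerivAt.fun_sum fun s _ => (h (t s)).const_smul _
  simpa only [sum_vandermonde_inv_smul ht c', sum_vandermonde_inv_smul ht (c · _)] using hc

section AdjugatePoly

open Polynomial

variable {ι R : Type*} [Fintype ι] [DecidableEq ι] [CommRing R]

/-- The adjugate `adj(X - A)` of the characteristic matrix, as a polynomial whose coefficients
are matrices. Up to sign these coefficients are the Newton tensors of `A`. -/
noncomputable def adjugatePoly (A : Matrix ι ι R) : (Matrix ι ι R)[X] :=
  matPolyEquiv A.charmatrix.adjugate

theorem adjugatePoly_mul_X_sub_C (A : Matrix ι ι R) :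
    adjugatePoly A * (X - C A) = A.charpoly.map (algebraMap R (Matrix ι ι R)) := by
  rw [adjugatePoly, ← matPolyEquiv_charmatrix, ← map_mul, adjugate_mul, matPolyEquiv_smul_one,
    charpoly]

theorem coeff_adjugatePoly (A : Matrix ι ι R) (m : ℕ) :
    (adjugatePoly A).coeff m
      = A.charpoly.coeff (m + 1) • (1 : Matrix ι ι R) + (adjugatePoly A).coeff (m + 1) * A := by
  rw [← sub_eq_iff_eq_add, ← coeff_mul_X_sub_C, adjugatePoly_mul_X_sub_C, coeff_map,
    Algebra.algebraMap_eq_smul_one]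

theorem coeff_adjugatePoly_eq_zero (A : Matrix ι ι R) {m : ℕ} (hm : Fintype.card ι ≤ m) :
    (adjugatePoly A).coeff m = 0 := by
  nontriviality R
  nontriviality Matrix ι ι R
  by_contra hcoeff
  have hne : adjugatePoly A ≠ 0 := fun h => hcoeff (by rw [h, coeff_zero])
  have hdeg : (adjugatePoly A).natDegree + 1 ≤ Fintype.card ι := by
    calc
      _ = (adjugatePoly A * (X - C A)).natDegree := by
        rw [natDegree_mul' (by simpa using hne), natDegree_X_sub_C]
      _ ≤ A.charpoly.natDegree := adjugatePoly_mul_X_sub_C A ▸ natDegree_map_le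
      _ = Fintype.card ι := charpoly_natDegree_eq_dim A
  exact hcoeff (coeff_eq_zero_of_natDegree_lt (by omega))

theorem eval_scalar_adjugatePoly (A : Matrix ι ι R) (t : R) :
    (adjugatePoly A).eval (scalar ι t) = (scalar ι t - A).adjugate := by
  have hchar : A.charmatrix.map (eval t) = scalar ι t - A := by
    rw [← matPolyEquiv_eval_eq_map, matPolyEquiv_charmatrix, eval_sub, eval_X, eval_C]
  rw [adjugatePoly, matPolyEquiv_eval_eq_map, ← hchar]
  exact (evalRingHom t).map_adjugate A.charmatrix

theorem adjugate_scalar_sub (A : Matrix ι ι R) (t : R) {N : ℕ} (hN : Fintype.card ι < N) :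
    (scalar ι t - A).adjugate = ∑ m : Fin N, t ^ (m : ℕ) • (adjugatePoly A).coeff m := by
  have hdeg : (adjugatePoly A).natDegree < N :=
    (natDegree_le_iff_coeff_eq_zero.2 fun _ hm => coeff_adjugatePoly_eq_zero A hm.le).trans_lt hN
  rw [← eval_scalar_adjugatePoly, eval_eq_sum_range' hdeg, ← Fin.sum_univ_eq_sum_range
    (fun m => (adjugatePoly A).coeff m * scalar ι t ^ m)]
  refine Finset.sum_congr rfl fun m _ => ?_
  rw [← map_pow, smul_eq_mul_diagonal]
  rfl

theorem det_scalar_sub (A : Matrix ι ι R) (t : R) {N : ℕ} (hN : Fintype.card ι < N) :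
    (scalar ι t - A).det = ∑ m : Fin N, t ^ (m : ℕ) • A.charpoly.coeff m := by
  nontriviality R
  have hdeg : A.charpoly.natDegree < N := by rwa [charpoly_natDegree_eq_dim]
  rw [← eval_charpoly, eval_eq_sum_range' hdeg, Finset.sum_range]
  simp only [smul_eq_mul, mul_comm]

end AdjugatePoly

section Jacobi

variable {𝕜 E ι : Type*} [NontriviallyNormedField 𝕜] [NormedAddCommGroup E] [NormedSpace 𝕜 E]
  [Fintype ι] [DecidableEq ι] {A : E → Matrix ι ι 𝕜} {A' : Matrix ι ι (E →L[𝕜] 𝕜)} {x : E}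

theorem hasFDerivAt_det (hA : ∀ i j, HasFDerivAt (fun y => A y i j) (A' i j) x) :
    HasFDerivAt (fun y => (A y).det) (∑ i, ∑ l, (A x).adjugate i l • A' l i) x := by
  let detMultilinear : ContinuousMultilinearMap 𝕜 (fun _ : ι => ι → 𝕜) 𝕜 :=
    ⟨(detRowAlternating : (ι → 𝕜) [⋀^ι]→ₗ[𝕜] 𝕜).toMultilinearMap, continuous_id.matrix_det⟩
  have hrows : HasFDerivAt (fun y i => A y i)
      (ContinuousLinearMap.pi fun i => ContinuousLinearMap.pi (A' i)) x :=
    hasFDerivAt_pi.2 fun i => hasFDerivAt_pi.2 (hA i)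
  refine ((detMultilinear.hasFDerivAt (A x)).comp x hrows).congr_fderiv ?_
  ext v
  have hrow (l : ι) : ((A x).updateRow l fun i => A' l i v).det
      = ∑ i, (A x).adjugate i l * A' l i v := by
    rw [← cramer_transpose_apply, cramer_eq_adjugate_mulVec, ← adjugate_transpose]
    rfl
  have hderiv : detMultilinear.linearDeriv (A x) (fun l i => A' l i v)
      = ∑ l, ((A x).updateRow l fun i => A' l i v).det :=
    detMultilinear.linearDeriv_apply _ _
  simp_rw [hrow] at hderiv
  rw [Finset.sum_comm] at hderiv
  simpa using hderiv

theorem hasFDerivAt_charpoly_coeff (hA : ∀ i j, HasFDerivAt (fun y => A y i j) (A' i j) x)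
    (m : ℕ) : HasFDerivAt (fun y => (A y).charpoly.coeff m)
      (-∑ i, ∑ l, (adjugatePoly (A x)).coeff m i l • A' l i) x := by
  let N := Fintype.card ι + m + 1
  have hN : Fintype.card ι < N := by omega
  refine hasFDerivAt_of_hasFDerivAt_sum_pow_smul (N := N)
    (c := fun m y => (A y).charpoly.coeff m)
    (c' := fun m => -∑ i, ∑ l, (adjugatePoly (A x)).coeff m i l • A' l i)
    (fun t => ?_) ⟨m, by omega⟩
  have hentry (i j : ι) : HasFDerivAt (fun y => (scalar ι t - A y) i j) (-A' i j) x :=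
    (hA i j).const_sub _
  simp_rw [← det_scalar_sub _ t hN]
  refine (hasFDerivAt_det hentry).congr_fderiv ?_
  rw [adjugate_scalar_sub _ t hN]
  simp only [Matrix.sum_apply, Matrix.smul_apply, Finset.sum_smul, smul_neg, Finset.smul_sum,
    Finset.sum_neg_distrib, smul_assoc]
  simp_rw [Finset.sum_comm (t := (Finset.univ : Finset (Fin N)))]

end Jacobi

section NewtonTensor

variable {n : ℕ}

theorem coeff_adjugatePoly_eq_newtonT (A : Matrix (Fin n) (Fin n) ℝ) {k : ℕ} (hk : k < n) :
    (adjugatePoly A).coeff (n - (k + 1)) = (-1 : ℝ) ^ k • newtonT k A := by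
  induction k with
  | zero =>
    have hlead : A.charpoly.coeff n = 1 := by
      simpa using A.charpoly_monic.coeff_natDegree
    rw [coeff_adjugatePoly, Nat.sub_add_cancel hk, hlead,
      coeff_adjugatePoly_eq_zero A (Fintype.card_fin n).le]
    simp [newtonT]
  | succ k ih =>
    have hindex : n - (k + 1 + 1) + 1 = n - (k + 1) := by omega
    have hsign : (-1 : ℝ) ^ (k + 1) * (-1) ^ (k + 1) = 1 := by simp [← mul_pow]
    rw [coeff_adjugatePoly, hindex, ih (by omega), newtonT, esymmMat, smul_sub, smul_smul,
      ← mul_assoc, hsign, one_mul, pow_succ, mul_neg_one, neg_smul, sub_neg_eq_add, smul_mul_assoc]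

variable {E : Type*} [NormedAddCommGroup E] [NormedSpace ℝ E]
  {A : E → Matrix (Fin n) (Fin n) ℝ} {A' : Matrix (Fin n) (Fin n) (E →L[ℝ] ℝ)} {x : E} {k : ℕ}

theorem hasFDerivAt_esymmMat_succ (hk : k < n)
    (hA : ∀ i j, HasFDerivAt (fun y => A y i j) (A' i j) x) :
    HasFDerivAt (fun y => esymmMat (k + 1) (A y)) (∑ i, ∑ l, newtonT k (A x) i l • A' l i) x := by
  have hsign : (-1 : ℝ) ^ (k + 1) * (-1) ^ k = -1 := by
    rw [pow_succ, mul_right_comm, ← mul_pow]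
    simp
  refine ((hasFDerivAt_charpoly_coeff hA (n - (k + 1))).const_mul ((-1) ^ (k + 1))).congr_fderiv ?_
  simp only [coeff_adjugatePoly_eq_newtonT (A x) hk, Matrix.smul_apply, smul_assoc,
    ← Finset.smul_sum]
  rw [smul_neg, smul_smul, hsign, neg_smul, one_smul, neg_neg]

theorem newtonT_succ_apply (k : ℕ) (B : Matrix (Fin n) (Fin n) ℝ) (i j : Fin n) :
    newtonT (k + 1) B i j
      = esymmMat (k + 1) B * (1 : Matrix (Fin n) (Fin n) ℝ) i j - ∑ l, newtonT k B i l * B l j := by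
  rw [newtonT, Matrix.sub_apply, Matrix.smul_apply, smul_eq_mul, mul_apply]

theorem differentiableAt_newtonT (hk : k ≤ n)
    (hA : ∀ i j, DifferentiableAt ℝ (fun y => A y i j) x) (i j : Fin n) :
    DifferentiableAt ℝ (fun y => newtonT k (A y) i j) x := by
  induction k generalizing j with
  | zero => exact differentiableAt_const _
  | succ k ih =>
    have hesymm := (hasFDerivAt_esymmMat_succ hk fun i j => (hA i j).hasFDerivAt).differentiableAt
    simp_rw [newtonT_succ_apply]
    exact (hesymm.mul_const _).fun_sub <|
      .fun_sum fun l _ => (ih (by omega) l).fun_mul (hA l j)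

end NewtonTensor

section PartialDerivatives

variable {n : ℕ} {v w : (Fin n → ℝ) → ℝ} {x : Fin n → ℝ}

theorem pd_congr (h : v =ᶠ[𝓝 x] w) (i : Fin n) : pd i v x = pd i w x := by
  rw [pd, h.fderiv_eq, pd]

theorem pd_sub (hv : DifferentiableAt ℝ v x) (hw : DifferentiableAt ℝ w x) (i : Fin n) :
    pd i (fun y => v y - w y) x = pd i v x - pd i w x := by
  simp only [pd, fderiv_fun_sub hv hw, _root_.sub_apply]

theorem pd_mul (hv : DifferentiableAt ℝ v x) (hw : DifferentiableAt ℝ w x) (i : Fin n) :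
    pd i (fun y => v y * w y) x = v x * pd i w x + pd i v x * w x := by
  simp [pd, fderiv_fun_mul hv hw, mul_comm (w x)]

theorem pd_mul_const (hw : DifferentiableAt ℝ w x) (c : ℝ) (i : Fin n) :
    pd i (fun y => w y * c) x = pd i w x * c := by
  simp [pd, fderiv_mul_const hw, mul_comm c]

theorem pd_sum {α : Type*} {s : Finset α} {f : α → (Fin n → ℝ) → ℝ}
    (hf : ∀ a ∈ s, DifferentiableAt ℝ (f a) x) (i : Fin n) :
    pd i (fun y => ∑ a ∈ s, f a y) x = ∑ a ∈ s, pd i (f a) x := by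
  simp only [pd, fderiv_fun_sum hf, _root_.sum_apply]

theorem contDiffAt_pd {a b : WithTop ℕ∞} (hw : ContDiffAt ℝ a w x) (hab : b + 1 ≤ a)
    (i : Fin n) : ContDiffAt ℝ b (pd i w) x :=
  (hw.fderiv_right hab).clm_apply contDiffAt_const

theorem pd_comm (hw : ContDiffAt ℝ 2 w x) (i j : Fin n) : pd i (pd j w) x = pd j (pd i w) x := by
  have hdiff : DifferentiableAt ℝ (fderiv ℝ w) x :=
    (hw.fderiv_right (m := 1) (by norm_num)).differentiableAt one_ne_zero
  have hsecond (a b : Fin n) :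
      pd a (pd b w) x = fderiv ℝ (fderiv ℝ w) x (Pi.single a 1) (Pi.single b 1) := by
    change fderiv ℝ (fun y => fderiv ℝ w y (Pi.single b 1)) x (Pi.single a 1) = _
    simp [fderiv_clm_apply hdiff (differentiableAt_const _)]
  rw [hsecond, hsecond]
  exact hw.isSymmSndFDerivAt (by simp) _ _

end PartialDerivatives

section Jets

variable {n : ℕ} {u : (Fin n → ℝ) → ℝ} {x : Fin n → ℝ}

theorem differentiableAt_jet (hu : ContDiffAt ℝ 2 u x) :
    DifferentiableAt ℝ (fun y => (y, u y, grad u y)) x := by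
  have hgrad : DifferentiableAt ℝ (grad u) x :=
    differentiableAt_pi.2 fun i =>
      (contDiffAt_pd (b := 1) hu (by norm_num) i).differentiableAt one_ne_zero
  exact differentiableAt_id.prodMk ((hu.differentiableAt two_ne_zero).prodMk hgrad)

theorem differentiableAt_hess (hu : ContDiffAt ℝ 3 u x) (i j : Fin n) :
    DifferentiableAt ℝ (fun y => hess u y i j) x :=
  (contDiffAt_pd (b := 1) (contDiffAt_pd (b := 2) hu (by norm_num) j) (by norm_num) i)
    |>.differentiableAt one_ne_zero

theorem pd_hess_comm (hu : ContDiffAt ℝ 3 u x) (i j l : Fin n) :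
    pd j (fun y => hess u y l i) x = pd i (fun y => hess u y l j) x := by
  have hsymm (m : Fin n) : (fun y => hess u y l m) =ᶠ[𝓝 x] pd m (pd l u) :=
    (hu.eventually (by simp)).mono fun y hy => pd_comm (hy.of_le (by norm_num)) l m
  rw [pd_congr (hsymm i), pd_congr (hsymm j)]
  exact pd_comm (contDiffAt_pd hu (by norm_num) l) j i

end Jets

section Divergence

variable {n k : ℕ} {A : (Fin n → ℝ) → Matrix (Fin n) (Fin n) ℝ} {x : Fin n → ℝ}

theorem pd_esymmMat_succ (hk : k < n)
    (hA : ∀ i j, DifferentiableAt ℝ (fun y => A y i j) x) (p : Fin n) :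
    pd p (fun y => esymmMat (k + 1) (A y)) x
      = ∑ i, ∑ l, newtonT k (A x) i l * pd p (fun y => A y l i) x := by
  have hesymm := hasFDerivAt_esymmMat_succ hk fun i j => (hA i j).hasFDerivAt
  simp [pd, hesymm.fderiv]

theorem pd_newtonT_succ (hk : k < n)
    (hA : ∀ i j, DifferentiableAt ℝ (fun y => A y i j) x) (p i j : Fin n) :
    pd p (fun y => newtonT (k + 1) (A y) i j) x
      = pd p (fun y => esymmMat (k + 1) (A y)) x * (1 : Matrix (Fin n) (Fin n) ℝ) i j
        - ∑ l, (newtonT k (A x) i l * pd p (fun y => A y l j) x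
          + pd p (fun y => newtonT k (A y) i l) x * A x l j) := by
  have hesymm := (hasFDerivAt_esymmMat_succ hk fun i j => (hA i j).hasFDerivAt).differentiableAt
  have hnewton := differentiableAt_newtonT hk.le hA i
  have hprod (l : Fin n) : DifferentiableAt ℝ (fun y => newtonT k (A y) i l * A y l j) x :=
    (hnewton l).fun_mul (hA l j)
  simp_rw [newtonT_succ_apply]
  rw [pd_sub (hesymm.mul_const _) (.fun_sum fun l _ => hprod l), pd_mul_const hesymm,
    pd_sum fun l _ => hprod l]
  simp_rw [pd_mul (hnewton _) (hA _ j)]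

theorem sum_pd_newtonT_succ (hk : k < n)
    (hA : ∀ i j, DifferentiableAt ℝ (fun y => A y i j) x) (j : Fin n) :
    ∑ i, pd i (fun y => newtonT (k + 1) (A y) i j) x
      = (∑ i, ∑ l, newtonT k (A x) i l *
            (pd j (fun y => A y l i) x - pd i (fun y => A y l j) x))
        - ∑ i, ∑ l, pd i (fun y => newtonT k (A y) i l) x * A x l j := by
  have hsigma : ∑ i, pd i (fun y => esymmMat (k + 1) (A y)) x * (1 : Matrix (Fin n) (Fin n) ℝ) i j
      = ∑ i, ∑ l, newtonT k (A x) i l * pd j (fun y => A y l i) x := by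
    simp [one_apply, pd_esymmMat_succ hk hA]
  simp_rw [pd_newtonT_succ hk hA, Finset.sum_sub_distrib, hsigma, mul_sub, Finset.sum_sub_distrib,
    Finset.sum_add_distrib]
  ring

theorem sum_pd_newtonT_succ_hess_sub (hk : k < n) {u : (Fin n → ℝ) → ℝ}
    (hu : ContDiffAt ℝ 3 u x) {G : (Fin n → ℝ) → Matrix (Fin n) (Fin n) ℝ}
    (hG : ∀ i j, DifferentiableAt ℝ (fun y => G y i j) x) (hGsymm : ∀ᶠ y in 𝓝 x, (G y).IsSymm)
    (j : Fin n) :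
    ∑ i, pd i (fun y => newtonT (k + 1) (hess u y - G y) i j) x
      = (∑ i, ∑ l, newtonT k (hess u x - G x) i l *
            (pd i (fun y => G y l j) x - pd j (fun y => G y i l) x))
        - ∑ i, ∑ l, pd i (fun y => newtonT k (hess u y - G y) i l) x *
            (hess u x - G x) l j := by
  have hhess := differentiableAt_hess hu
  have hpd (p a b : Fin n) : pd p (fun y => (hess u y - G y) a b) x
      = pd p (fun y => hess u y a b) x - pd p (fun y => G y a b) x :=
    pd_sub (hhess a b) (hG a b) p
  have hpdG (p a b : Fin n) : pd p (fun y => G y a b) x = pd p (fun y => G y b a) x :=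
    pd_congr (hGsymm.mono fun y hy => hy.apply b a) p
  have hcodazzi (i l : Fin n) :
      pd j (fun y => (hess u y - G y) l i) x - pd i (fun y => (hess u y - G y) l j) x
        = pd i (fun y => G y l j) x - pd j (fun y => G y i l) x := by
    rw [hpd, hpd, pd_hess_comm hu, hpdG j l i]
    ring
  rw [sum_pd_newtonT_succ hk (A := fun y => hess u y - G y)
    fun a b => (hhess a b).fun_sub (hG a b)]
  simp_rw [hcodazzi]

end Divergence

theorem one_step_divergence_identity_newton_tensors_general
    {n k : ℕ} (hk : k < n) (Ω : Set (Fin n → ℝ)) (hΩ : IsOpen Ω)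
    (u : (Fin n → ℝ) → ℝ) (hu : ContDiffOn ℝ 3 u Ω)
    (H : ((Fin n → ℝ) × ℝ × (Fin n → ℝ)) → Matrix (Fin n) (Fin n) ℝ)
    (hH : ∀ i j : Fin n,
      DifferentiableOn ℝ (fun y => H y i j) (Ω ×ˢ ((univ : Set ℝ) ×ˢ (univ : Set (Fin n → ℝ)))))
    (hHsymm : ∀ y ∈ Ω ×ˢ ((univ : Set ℝ) ×ˢ (univ : Set (Fin n → ℝ))), (H y).IsSymm) :
    ∀ x ∈ Ω, ∀ j : Fin n,
      ∑ i, pd i (fun y => newtonT (k + 1) (hess u y - H (y, u y, grad u y)) i j) x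
        = (∑ i, ∑ l,
            newtonT k (hess u x - H (x, u x, grad u x)) i l *
              (pd i (fun y => H (y, u y, grad u y) l j) x
                - pd j (fun y => H (y, u y, grad u y) i l) x))
          - ∑ i, ∑ l,
              pd i (fun y => newtonT k (hess u y - H (y, u y, grad u y)) i l) x *
                (hess u x - H (x, u x, grad u x)) l j := by
  intro x hx j
  have hux : ContDiffAt ℝ 3 u x := hu.contDiffAt (hΩ.mem_nhds hx)
  have hdom : Ω ×ˢ ((univ : Set ℝ) ×ˢ (univ : Set (Fin n → ℝ))) ∈ 𝓝 (x, u x, grad u x) :=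
    prod_mem_nhds (hΩ.mem_nhds hx) (by simp)
  have hG (a b : Fin n) : DifferentiableAt ℝ (fun y => H (y, u y, grad u y) a b) x :=
    ((hH a b).differentiableAt hdom).fun_comp' x (differentiableAt_jet (hux.of_le (by norm_num)))
  have hGsymm : ∀ᶠ y in 𝓝 x, (H (y, u y, grad u y)).IsSymm :=
    Filter.eventually_of_mem (hΩ.mem_nhds hx) fun y hy => hHsymm _ (by simpa using hy)
  exact sum_pd_newtonT_succ_hess_sub hk hux hG hGsymm j

/-- One-step divergence identity for Newton tensors of the augmented
Hessian (identity (18), proved within Lemma 3.1). -/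
theorem one_step_divergence_identity_newton_tensors
    {n : ℕ} (hn : 3 ≤ n) (k : ℕ) (hk1 : 1 ≤ k) (hkn : k ≤ n - 1)
    (Ω : Set (Fin n → ℝ)) (hΩ : IsOpen Ω)
    (u : (Fin n → ℝ) → ℝ) (hu : ContDiffOn ℝ 3 u Ω)
    (H : ((Fin n → ℝ) × ℝ × (Fin n → ℝ)) → Matrix (Fin n) (Fin n) ℝ)
    (hH : ∀ i j : Fin n,
      ContDiffOn ℝ 1 (fun y => H y i j) (Ω ×ˢ ((univ : Set ℝ) ×ˢ (univ : Set (Fin n → ℝ)))))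
    (hHsymm : ∀ y ∈ Ω ×ˢ ((univ : Set ℝ) ×ˢ (univ : Set (Fin n → ℝ))), (H y).IsSymm) :
    ∀ x ∈ Ω, ∀ j : Fin n,
      ∑ i, pd i (fun y => newtonT k (hess u y - H (y, u y, grad u y)) i j) x
        = (∑ i, ∑ l,
            newtonT (k - 1) (hess u x - H (x, u x, grad u x)) i l *
              (pd i (fun y => H (y, u y, grad u y) l j) x
                - pd j (fun y => H (y, u y, grad u y) i l) x))
          - ∑ i, ∑ l,
              pd i (fun y => newtonT (k - 1) (hess u y - H (y, u y, grad u y)) i l) x *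
                (hess u x - H (x, u x, grad u x)) l j := by
  obtain ⟨k, rfl⟩ := Nat.exists_eq_add_of_le' hk1
  exact one_step_divergence_identity_newton_tensors_general (by omega) Ω hΩ u hu H
    (fun i j => (hH i j).differentiableOn one_ne_zero) hHsymm
end

section
/- Pointwise second difference quotient inequality from concavity (Lemma 4.1 for classical solutions). Let Ω ⊆ ℝⁿ be a domain with n ≥ 3, let 2 ≤ k ≤ n, let f : Ω×ℝ×ℝⁿ → ℝ be continuous and positive, let H : Ω×ℝ×ℝⁿ → Sym_n(ℝ) be continuous, and let u ∈ C²(Ω) satisfy σ_k(A_H[u](x)) = f(x,u(x),∇u(x))^k and λ(A_H[u](x)) ∈ Γ_k^+ for every x ∈ Ω. Write f[u](x) := f(x,u(x),∇u(x)). Then for every h ≠ 0 and every x ∈ Ω such that x + h e_l ∈ Ω and x − h e_l ∈ Ω for all l ∈ {1,…,n}, one has Σ_{l=1}^n k·f[u](x)^{k−1}·Δ_{ll}^h(f[u])(x) ≤ Σ_{i,j} F[u]^{ij}(x)·(Σ_{l=1}^n Δ_{ll}^h(∂_i∂_j u)(x)) − Σ_{l=1}^n Σ_{i,j} F[u]^{ij}(x)·Δ_{ll}^h((H[u])_{ij})(x).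 -/
open MeasureTheory Metric Set Matrix

/-!
Gårding's inequality `k σ_k(A)^((k-1)/k) σ_k(B)^(1/k) ≤ T_{k-1}(A) : B` on `Γ_k^+` is an equality
for `B = A`. Applied with `A = A_H[u](x)` and `B = A_H[u](y)`, it says that
`y ↦ k f[u](x)^(k-1) f[u](y)` touches `y ↦ F[u]^{ij}(x) A_H[u]_{ij}(y)` from below at `y = x`, so
their second difference quotients at `x` are ordered in the same way.

For diagonal matrices, Gårding's inequality is the derivative at `t = 0⁺` of the concavity estimate
`σ_k(x + t y)^(1/k) ≥ σ_k(x)^(1/k) + t σ_k(y)^(1/k)`. This follows from the inequality of Mahler for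
geometric means, since `σ_k` is the product of the quotients `σ_{j+1} / σ_j`, `j < k`, which are
superadditive by the argument of Marcus and Lopes; Newton's inequality (a consequence of Rolle's
theorem and Laguerre's inequality `p p'' ≤ p' ^ 2`) keeps the variables with one entry removed in
the cone. For symmetric matrices, the pairing `T_{k-1}(A) : B` is a doubly stochastic average of
pairings of eigenvalues, and Birkhoff's theorem reduces it to the diagonal case.
-/

section ElementarySymmetric

variable {ι R : Type*} [CommSemiring R]

/-- The elementary symmetric polynomial `σ_k` in the variables `x i`, `i ∈ s`. Keeping the index set
`s` explicit makes `σ_k(x | i)`, the polynomial with the variable `x i` removed, available as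
`esymmOn (s.erase i) k x`. -/
def esymmOn (s : Finset ι) (k : ℕ) (x : ι → R) : R := (s.val.map x).esymm k

theorem esymmOn_eq_sum (s : Finset ι) (k : ℕ) (x : ι → R) :
    esymmOn s k x = ∑ t ∈ s.powersetCard k, ∏ i ∈ t, x i :=
  Finset.esymm_map_val x s k

@[simp]
theorem esymmOn_zero (s : Finset ι) (x : ι → R) : esymmOn s 0 x = 1 := by
  simp [esymmOn_eq_sum]

theorem esymmOn_one (s : Finset ι) (x : ι → R) : esymmOn s 1 x = ∑ i ∈ s, x i := by
  simp [esymmOn_eq_sum, Finset.powersetCard_one]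

theorem esymmOn_eq_zero_of_card_lt {s : Finset ι} {k : ℕ} (hk : s.card < k) (x : ι → R) :
    esymmOn s k x = 0 := by
  simp [esymmOn_eq_sum, Finset.powersetCard_eq_empty.2 hk]

theorem esymmOn_smul (s : Finset ι) (k : ℕ) (c : R) (x : ι → R) :
    esymmOn s k (c • x) = c ^ k * esymmOn s k x := by
  simp only [esymmOn_eq_sum, Finset.mul_sum, Pi.smul_apply, smul_eq_mul]
  refine Finset.sum_congr rfl fun t ht => ?_
  rw [Finset.prod_mul_distrib, Finset.prod_const, (Finset.mem_powersetCard.1 ht).2]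

theorem esymmOn_univ_comp_equiv [Fintype ι] (e : ι ≃ ι) (k : ℕ) (x : ι → R) :
    esymmOn Finset.univ k (x ∘ e) = esymmOn Finset.univ k x := by
  rw [esymmOn, esymmOn, ← Multiset.map_map, Multiset.map_univ_val_equiv]

theorem esymmOn_succ_eq_add_erase [DecidableEq ι] {s : Finset ι} {a : ι} (ha : a ∈ s) (k : ℕ)
    (x : ι → R) :
    esymmOn s (k + 1) x = esymmOn (s.erase a) (k + 1) x + x a * esymmOn (s.erase a) k x := by
  conv_lhs => rw [esymmOn, ← Finset.insert_erase ha,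
    Finset.insert_val_of_notMem (Finset.notMem_erase a s)]
  simp [esymmOn, Multiset.esymm, Multiset.powersetCard_cons, Multiset.sum_map_mul_left]

theorem sum_powersetCard_succ_sum_erase [DecidableEq ι] {M : Type*} [AddCommMonoid M]
    (s : Finset ι) (k : ℕ) (g : ι → Finset ι → M) :
    ∑ t ∈ s.powersetCard (k + 1), ∑ i ∈ t, g i (t.erase i) =
      ∑ i ∈ s, ∑ t ∈ (s.erase i).powersetCard k, g i t := by
  rw [Finset.sum_sigma', Finset.sum_sigma']
  refine Finset.sum_bij' (fun p _ => ⟨p.2, p.1.erase p.2⟩) (fun p _ => ⟨insert p.1 p.2, p.1⟩)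
    ?_ ?_ ?_ ?_ ?_
  all_goals
    rintro ⟨_, _⟩
    simp only [Finset.mem_sigma, Finset.mem_powersetCard, Sigma.mk.injEq, heq_eq_eq]
    grind

theorem sum_mul_esymmOn_erase [DecidableEq ι] (s : Finset ι) (k : ℕ) (x : ι → R) :
    ∑ i ∈ s, x i * esymmOn (s.erase i) k x = (k + 1) * esymmOn s (k + 1) x := by
  simp only [esymmOn_eq_sum, Finset.mul_sum]
  rw [← sum_powersetCard_succ_sum_erase s k fun i t => x i * ∏ j ∈ t, x j]
  refine Finset.sum_congr rfl fun t ht => ?_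
  rw [Finset.sum_congr rfl fun i hi => Finset.mul_prod_erase t x hi, Finset.sum_const,
    (Finset.mem_powersetCard.1 ht).2, nsmul_eq_mul, Nat.cast_succ]

theorem hasDerivAt_esymmOn_succ [DecidableEq ι] {𝕜 : Type*} [NontriviallyNormedField 𝕜]
    (s : Finset ι) (k : ℕ) {x : 𝕜 → ι → 𝕜} {x' : ι → 𝕜} {t : 𝕜} (hx : HasDerivAt x x' t) :
    HasDerivAt (fun τ => esymmOn s (k + 1) (x τ))
      (∑ i ∈ s, x' i * esymmOn (s.erase i) k (x t)) t := by
  simp only [esymmOn_eq_sum, Finset.mul_sum]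
  rw [← sum_powersetCard_succ_sum_erase s k fun i t' => x' i * ∏ j ∈ t', x t j]
  refine HasDerivAt.fun_sum fun u _ => ?_
  simpa only [smul_eq_mul, mul_comm] using
    HasDerivAt.fun_finsetProd fun i (_ : i ∈ u) => hasDerivAt_pi.1 hx i

end ElementarySymmetric

section NewtonInequality

open Polynomial

theorem splits_derivative_real {p : ℝ[X]} (hp : p.Splits) : (derivative p).Splits := by
  rw [splits_iff_card_roots] at hp ⊢
  have rolle := card_roots_le_derivative p
  have card_le := card_roots' (derivative p)
  have degree_le := natDegree_derivative_le p
  omega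

theorem splits_iterate_derivative_real {p : ℝ[X]} (hp : p.Splits) (j : ℕ) :
    (derivative^[j] p).Splits := by
  induction j with
  | zero => exact hp
  | succ j ih =>
    rw [Function.iterate_succ_apply']
    exact splits_derivative_real ih

theorem eval_mul_eval_derivative_derivative_le_sq {R : Type*} [CommRing R] [LinearOrder R]
    [IsStrictOrderedRing R] {p : R[X]} (hp : p.Splits) (t : R) :
    p.eval t * (derivative (derivative p)).eval t ≤ (derivative p).eval t ^ 2 := by
  unfold Splits at hp
  induction hp using Submonoid.closure_induction with
  | mem q hq =>
    rcases hq with ⟨a, rfl⟩ | ⟨a, rfl⟩ <;> simp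
  | one => simp
  | mul p q _ _ hp hq =>
    simp only [derivative_mul, derivative_add, eval_mul, eval_add]
    nlinarith [mul_le_mul_of_nonneg_left hp (sq_nonneg (q.eval t)),
      mul_le_mul_of_nonneg_left hq (sq_nonneg (p.eval t))]

theorem coeff_mul_coeff_add_two_le {p : ℝ[X]} (hp : p.Splits) (j : ℕ) :
    (j + 2) * (p.coeff j * p.coeff (j + 2)) ≤ (j + 1) * p.coeff (j + 1) ^ 2 := by
  have eval_zero : ∀ i, (derivative^[i] p).eval 0 = i.factorial * p.coeff i := fun i => by
    rw [← coeff_zero_eq_eval_zero, coeff_iterate_derivative, zero_add, Nat.descFactorial_self,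
      nsmul_eq_mul]
  have laguerre := eval_mul_eval_derivative_derivative_le_sq
    (splits_iterate_derivative_real hp j) 0
  simp only [← Function.iterate_succ_apply' (fun q : ℝ[X] => derivative q), eval_zero,
    Nat.factorial_succ, Nat.succ_eq_add_one] at laguerre
  push_cast at laguerre
  have factor_pos : (0 : ℝ) < (j.factorial : ℝ) ^ 2 * (j + 1) := by positivity
  refine le_of_mul_le_mul_left ?_ factor_pos
  linarith

theorem coeff_mul_coeff_add_two_le_sq {p : ℝ[X]} (hp : p.Splits) (j : ℕ) :
    p.coeff j * p.coeff (j + 2) ≤ p.coeff (j + 1) ^ 2 := by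
  have sharp := coeff_mul_coeff_add_two_le hp j
  by_contra! h
  nlinarith [sq_nonneg (p.coeff (j + 1)), mul_nonneg j.cast_nonneg (sub_nonneg.2 h.le)]

theorem esymmOn_mul_esymmOn_add_two_le_sq {ι : Type*} (s : Finset ι) (k : ℕ) (x : ι → ℝ) :
    esymmOn s k x * esymmOn s (k + 2) x ≤ esymmOn s (k + 1) x ^ 2 := by
  obtain hlt | hle := lt_or_ge s.card (k + 2)
  · rw [esymmOn_eq_zero_of_card_lt hlt, mul_zero]
    positivity
  obtain ⟨d, hd⟩ := Nat.exists_eq_add_of_le hle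
  have vieta : ∀ i ≤ s.card,
      (∏ i ∈ s, (X + C (x i))).coeff i = esymmOn s (s.card - i) x := fun i hi => by
    rw [Finset.prod_X_add_C_coeff s x hi, esymmOn_eq_sum]
  have h := coeff_mul_coeff_add_two_le_sq
    (Splits.prod fun i (_ : i ∈ s) => Splits.X_add_C (x i)) d
  rwa [vieta d (by omega), vieta (d + 1) (by omega), vieta (d + 2) (by omega), mul_comm,
    show s.card - d = k + 2 by omega, show s.card - (d + 1) = k + 1 by omega,
    show s.card - (d + 2) = k by omega] at h

end NewtonInequality

section GardingCone

variable {ι : Type*} {s : Finset ι} {k : ℕ} {x y : ι → ℝ}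

/-- The Gårding cone `Γ_k^+` in the variables `x i`, `i ∈ s`. The condition at `j = 0` holds
trivially, as `σ_0 = 1`; including it spares case distinctions. -/
def gardingCone (s : Finset ι) (k : ℕ) : Set (ι → ℝ) := {x | ∀ j ≤ k, 0 < esymmOn s j x}

theorem gardingCone_antitone (s : Finset ι) : Antitone (gardingCone s) :=
  fun _ _ hjk _ hx i hi => hx i (hi.trans hjk)

theorem mem_gardingCone_zero (s : Finset ι) (x : ι → ℝ) : x ∈ gardingCone s 0 := by
  intro j hj
  simp [Nat.le_zero.1 hj]

theorem mem_gardingCone_succ :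
    x ∈ gardingCone s (k + 1) ↔ x ∈ gardingCone s k ∧ 0 < esymmOn s (k + 1) x :=
  ⟨fun hx => ⟨gardingCone_antitone s k.le_succ hx, hx (k + 1) le_rfl⟩, fun hx j hj =>
    (Nat.le_succ_iff.1 hj).elim (hx.1 j) fun h => h ▸ hx.2⟩

theorem smul_mem_gardingCone {c : ℝ} (hc : 0 < c) (hx : x ∈ gardingCone s k) :
    c • x ∈ gardingCone s k := by
  intro j hj
  rw [esymmOn_smul]
  exact mul_pos (pow_pos hc j) (hx j hj)

theorem comp_equiv_mem_gardingCone [Fintype ι] (e : ι ≃ ι) (hx : x ∈ gardingCone Finset.univ k) :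
    x ∘ e ∈ gardingCone Finset.univ k := by
  intro j hj
  rw [esymmOn_univ_comp_equiv]
  exact hx j hj

theorem mem_gardingCone_erase [DecidableEq ι] {i : ι} (hi : i ∈ s)
    (hx : x ∈ gardingCone s (k + 1)) : x ∈ gardingCone (s.erase i) k := by
  induction k with
  | zero => exact mem_gardingCone_zero _ x
  | succ k ih =>
    have lower := ih (gardingCone_antitone s (k + 1).le_succ hx)
    refine mem_gardingCone_succ.2 ⟨lower, ?_⟩
    have hk := lower k le_rfl
    have hk₁ := hx (k + 1) (k + 1).le_succ
    have hk₂ := hx (k + 2) le_rfl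
    rw [esymmOn_succ_eq_add_erase hi] at hk₁ hk₂
    have newton := esymmOn_mul_esymmOn_add_two_le_sq (s.erase i) k x
    by_contra! nonpos
    nlinarith [mul_pos hk hk₂, mul_nonneg_of_nonpos_of_nonpos nonpos nonpos]

/-- The quotient `σ_{k+1} / σ_k`, whose superadditivity on the Gårding cone `Γ_k^+` is the theorem
of Marcus and Lopes. -/
noncomputable def esymmQuot (s : Finset ι) (k : ℕ) (x : ι → ℝ) : ℝ :=
  esymmOn s (k + 1) x / esymmOn s k x

theorem esymmQuot_pos (hx : x ∈ gardingCone s (k + 1)) : 0 < esymmQuot s k x :=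
  div_pos (hx (k + 1) le_rfl) (hx k k.le_succ)

theorem mem_gardingCone_succ_of_esymmQuot_pos (hx : x ∈ gardingCone s k)
    (hq : 0 < esymmQuot s k x) : x ∈ gardingCone s (k + 1) :=
  mem_gardingCone_succ.2 ⟨hx, (div_pos_iff_of_pos_right (hx k le_rfl)).1 hq⟩

theorem prod_esymmQuot (hx : x ∈ gardingCone s k) :
    ∏ j ∈ Finset.range k, esymmQuot s j x = esymmOn s k x := by
  induction k with
  | zero => simp
  | succ k ih =>
    rw [Finset.prod_range_succ, ih (gardingCone_antitone s k.le_succ hx), esymmQuot,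
      mul_div_cancel₀ _ (hx k k.le_succ).ne']

theorem add_esymmQuot_erase [DecidableEq ι] {i : ι} (hi : i ∈ s)
    (hx : x ∈ gardingCone (s.erase i) k) :
    x i + esymmQuot (s.erase i) k x = esymmOn s (k + 1) x / esymmOn (s.erase i) k x := by
  rw [esymmQuot, esymmOn_succ_eq_add_erase hi, add_div, mul_div_cancel_right₀ _ (hx k le_rfl).ne',
    add_comm]

theorem add_esymmQuot_erase_pos [DecidableEq ι] {i : ι} (hi : i ∈ s)
    (hx : x ∈ gardingCone s (k + 1)) : 0 < x i + esymmQuot (s.erase i) k x := by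
  have hxi := mem_gardingCone_erase hi hx
  rw [add_esymmQuot_erase hi hxi]
  exact div_pos (hx (k + 1) le_rfl) (hxi k le_rfl)

/-- The `i`-th summand is superadditive in the pair `(x i, esymmQuot (s.erase i) k x)` and
increasing in its second entry, so superadditivity of the quotients passes from `s.erase i` to `s`.
-/
theorem mul_esymmQuot_succ [DecidableEq ι] (hx : x ∈ gardingCone s (k + 1)) :
    (k + 2) * esymmQuot s (k + 1) x =
      ∑ i ∈ s, (x i - x i ^ 2 / (x i + esymmQuot (s.erase i) k x)) := by
  have hσ := (hx (k + 1) le_rfl).ne'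
  have term : ∀ i ∈ s, x i - x i ^ 2 / (x i + esymmQuot (s.erase i) k x) =
      x i * esymmOn (s.erase i) (k + 1) x / esymmOn s (k + 1) x := fun i hi => by
    rw [add_esymmQuot_erase hi (mem_gardingCone_erase hi hx), div_div_eq_mul_div, eq_div_iff hσ,
      sub_mul, div_mul_cancel₀ _ hσ, esymmOn_succ_eq_add_erase hi]
    ring
  rw [Finset.sum_congr rfl term, ← Finset.sum_div, sum_mul_esymmOn_erase, esymmQuot]
  push_cast
  ring

theorem add_sq_div_le_sq_div_add_sq_div {a b p q r : ℝ} (hp : 0 < p) (hq : 0 < q)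
    (hpq : p + q ≤ r) : (a + b) ^ 2 / r ≤ a ^ 2 / p + b ^ 2 / q :=
  calc (a + b) ^ 2 / r ≤ (a + b) ^ 2 / (p + q) := by gcongr
    _ ≤ a ^ 2 / p + b ^ 2 / q := by
      simpa using Finset.sq_sum_div_le_sum_sq_div Finset.univ ![a, b] (g := ![p, q])
        (by simp [Fin.forall_fin_two, hp, hq])

theorem esymmQuot_succ_add_le_of_erase [DecidableEq ι] (hx : x ∈ gardingCone s (k + 1))
    (hy : y ∈ gardingCone s (k + 1)) (hxy : x + y ∈ gardingCone s (k + 1))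
    (herase : ∀ i ∈ s, esymmQuot (s.erase i) k x + esymmQuot (s.erase i) k y ≤
      esymmQuot (s.erase i) k (x + y)) :
    esymmQuot s (k + 1) x + esymmQuot s (k + 1) y ≤ esymmQuot s (k + 1) (x + y) := by
  have factor_pos : (0 : ℝ) < k + 2 := by positivity
  refine le_of_mul_le_mul_left ?_ factor_pos
  rw [mul_add, mul_esymmQuot_succ hx, mul_esymmQuot_succ hy, mul_esymmQuot_succ hxy,
    ← Finset.sum_add_distrib]
  refine Finset.sum_le_sum fun i hi => ?_
  have titu := add_sq_div_le_sq_div_add_sq_div (a := x i) (b := y i)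
    (r := x i + y i + esymmQuot (s.erase i) k (x + y))
    (add_esymmQuot_erase_pos hi hx) (add_esymmQuot_erase_pos hi hy) (by linarith [herase i hi])
  simp only [Pi.add_apply]
  linarith

theorem add_mem_gardingCone_and_esymmQuot_add_le (hx : x ∈ gardingCone s k)
    (hy : y ∈ gardingCone s k) :
    x + y ∈ gardingCone s k ∧ esymmQuot s k x + esymmQuot s k y ≤ esymmQuot s k (x + y) := by
  classical
  induction k generalizing s with
  | zero =>
    refine ⟨mem_gardingCone_zero s _, ?_⟩
    simp [esymmQuot, esymmOn_one, Finset.sum_add_distrib]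
  | succ k ih =>
    obtain ⟨hxy, hq⟩ :=
      ih (gardingCone_antitone s k.le_succ hx) (gardingCone_antitone s k.le_succ hy)
    have hxy_succ := mem_gardingCone_succ_of_esymmQuot_pos hxy
      ((add_pos (esymmQuot_pos hx) (esymmQuot_pos hy)).trans_le hq)
    exact ⟨hxy_succ, esymmQuot_succ_add_le_of_erase hx hy hxy_succ fun i hi =>
      (ih (mem_gardingCone_erase hi hx) (mem_gardingCone_erase hi hy)).2⟩

theorem add_mem_gardingCone (hx : x ∈ gardingCone s k) (hy : y ∈ gardingCone s k) :
    x + y ∈ gardingCone s k :=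
  (add_mem_gardingCone_and_esymmQuot_add_le hx hy).1

theorem esymmQuot_add_le (hx : x ∈ gardingCone s k) (hy : y ∈ gardingCone s k) :
    esymmQuot s k x + esymmQuot s k y ≤ esymmQuot s k (x + y) :=
  (add_mem_gardingCone_and_esymmQuot_add_le hx hy).2

end GardingCone

section GardingInequality

variable {ι : Type*} {s : Finset ι}

theorem prod_rpow_add_prod_rpow_le {w p q : ι → ℝ} (hw : ∀ i ∈ s, 0 ≤ w i)
    (hw₁ : ∑ i ∈ s, w i = 1) (hp : ∀ i ∈ s, 0 < p i) (hq : ∀ i ∈ s, 0 < q i) :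
    ∏ i ∈ s, p i ^ w i + ∏ i ∈ s, q i ^ w i ≤ ∏ i ∈ s, (p i + q i) ^ w i := by
  have hpq : ∀ i ∈ s, 0 < p i + q i := fun i hi => add_pos (hp i hi) (hq i hi)
  have am_gm : ∀ r : ι → ℝ, (∀ i ∈ s, 0 < r i) →
      (∏ i ∈ s, r i ^ w i) / ∏ i ∈ s, (p i + q i) ^ w i ≤ ∑ i ∈ s, w i * (r i / (p i + q i)) := by
    intro r hr
    rw [← Finset.prod_div_distrib, Finset.prod_congr rfl fun i hi =>
      (Real.div_rpow (hr i hi).le (hpq i hi).le (w i)).symm]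
    exact Real.geom_mean_le_arith_mean_weighted s w _ hw hw₁ fun i hi =>
      (div_pos (hr i hi) (hpq i hi)).le
  have sum_eq_one :
      ∑ i ∈ s, w i * (p i / (p i + q i)) + ∑ i ∈ s, w i * (q i / (p i + q i)) = 1 := by
    rw [← Finset.sum_add_distrib, ← hw₁]
    refine Finset.sum_congr rfl fun i hi => ?_
    rw [← mul_add, ← add_div, div_self (hpq i hi).ne', mul_one]
  have prod_pos : 0 < ∏ i ∈ s, (p i + q i) ^ w i :=
    Finset.prod_pos fun i hi => Real.rpow_pos_of_pos (hpq i hi) _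
  rw [← div_le_one prod_pos, add_div, ← sum_eq_one]
  exact add_le_add (am_gm p hp) (am_gm q hq)

theorem add_pow_card_le_prod_add {p q : ι → ℝ} {a b : ℝ} (hs : s.Nonempty) (ha : 0 ≤ a)
    (hb : 0 ≤ b) (hp : ∀ i ∈ s, 0 < p i) (hq : ∀ i ∈ s, 0 < q i)
    (hpa : ∏ i ∈ s, p i = a ^ s.card) (hqb : ∏ i ∈ s, q i = b ^ s.card) :
    (a + b) ^ s.card ≤ ∏ i ∈ s, (p i + q i) := by
  have hpq : ∀ i ∈ s, 0 < p i + q i := fun i hi => add_pos (hp i hi) (hq i hi)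
  have card_ne_zero : (s.card : ℝ) ≠ 0 := Nat.cast_ne_zero.2 hs.card_ne_zero
  have mahler := prod_rpow_add_prod_rpow_le (w := fun _ => (s.card : ℝ)⁻¹)
    (fun _ _ => by positivity) (by simp [card_ne_zero]) hp hq
  rw [Real.finsetProd_rpow s p fun i hi => (hp i hi).le,
    Real.finsetProd_rpow s q fun i hi => (hq i hi).le,
    Real.finsetProd_rpow s _ fun i hi => (hpq i hi).le, hpa, hqb,
    Real.pow_rpow_inv_natCast ha hs.card_ne_zero, Real.pow_rpow_inv_natCast hb hs.card_ne_zero]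
    at mahler
  calc (a + b) ^ s.card ≤ ((∏ i ∈ s, (p i + q i)) ^ (s.card : ℝ)⁻¹) ^ s.card := by gcongr
    _ = ∏ i ∈ s, (p i + q i) :=
      Real.rpow_inv_natCast_pow (Finset.prod_nonneg fun i hi => (hpq i hi).le) hs.card_ne_zero

variable {k : ℕ} {x y : ι → ℝ} {a b : ℝ}

/-- Superadditivity of `σ_k ^ (1 / k)`, with the two roots named `a` and `b`. -/
theorem add_pow_le_esymmOn_add (ha : 0 ≤ a) (hb : 0 ≤ b) (hx : x ∈ gardingCone s k)
    (hy : y ∈ gardingCone s k) (hxa : esymmOn s k x = a ^ k) (hyb : esymmOn s k y = b ^ k) :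
    (a + b) ^ k ≤ esymmOn s k (x + y) := by
  obtain rfl | hk := eq_or_ne k 0
  · simp
  have quot_pos : ∀ {z}, z ∈ gardingCone s k → ∀ j ∈ Finset.range k, 0 < esymmQuot s j z :=
    fun hz j hj => esymmQuot_pos (gardingCone_antitone s (Finset.mem_range.1 hj) hz)
  have minkowski := add_pow_card_le_prod_add (Finset.nonempty_range_iff.2 hk) ha hb (quot_pos hx)
    (quot_pos hy) (by rw [prod_esymmQuot hx, Finset.card_range, hxa])
    (by rw [prod_esymmQuot hy, Finset.card_range, hyb])
  rw [Finset.card_range] at minkowski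
  refine minkowski.trans ?_
  rw [← prod_esymmQuot (add_mem_gardingCone hx hy)]
  refine Finset.prod_le_prod (fun j hj => (add_pos (quot_pos hx j hj) (quot_pos hy j hj)).le)
    fun j hj => ?_
  have hjk := gardingCone_antitone s (Finset.mem_range.1 hj).le
  exact esymmQuot_add_le (hjk hx) (hjk hy)

theorem le_of_hasDerivAt_of_eventually_le_nhdsGT {f g : ℝ → ℝ} {f' g' t : ℝ}
    (hf : HasDerivAt f f' t) (hg : HasDerivAt g g' t) (heq : f t = g t)
    (hle : ∀ᶠ τ in nhdsWithin t (Ioi t), f τ ≤ g τ) : f' ≤ g' := by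
  have right_le_punctured := nhdsGT_le_nhdsNE t
  refine le_of_tendsto_of_tendsto (hf.tendsto_slope.mono_left right_le_punctured)
    (hg.tendsto_slope.mono_left right_le_punctured) ?_
  filter_upwards [hle, self_mem_nhdsWithin] with τ hτ (htτ : t < τ)
  rw [slope_def_field, slope_def_field, heq]
  have := sub_pos.2 htτ
  gcongr

theorem mul_pow_mul_le_sum_mul_esymmOn_erase [DecidableEq ι] (ha : 0 ≤ a) (hb : 0 ≤ b)
    (hx : x ∈ gardingCone s (k + 1)) (hy : y ∈ gardingCone s (k + 1))
    (hxa : esymmOn s (k + 1) x = a ^ (k + 1)) (hyb : esymmOn s (k + 1) y = b ^ (k + 1)) :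
    (k + 1) * a ^ k * b ≤ ∑ i ∈ s, y i * esymmOn (s.erase i) k x := by
  have pow_deriv : HasDerivAt (fun t : ℝ => (a + t * b) ^ (k + 1)) ((k + 1) * a ^ k * b) 0 := by
    simpa using (((hasDerivAt_id (0 : ℝ)).mul_const b).const_add a).fun_pow (k + 1)
  have line_deriv : HasDerivAt (fun t : ℝ => x + t • y) y 0 :=
    hasDerivAt_pi.2 fun i => by
      simpa using ((hasDerivAt_id (0 : ℝ)).mul_const (y i)).const_add (x i)
  have esymm_deriv := hasDerivAt_esymmOn_succ s k line_deriv
  rw [zero_smul, add_zero] at esymm_deriv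
  refine le_of_hasDerivAt_of_eventually_le_nhdsGT pow_deriv esymm_deriv (by simp [hxa]) ?_
  filter_upwards [self_mem_nhdsWithin] with t (ht : 0 < t)
  exact add_pow_le_esymmOn_add ha (mul_nonneg ht.le hb) hx (smul_mem_gardingCone ht hy) hxa
    (by rw [esymmOn_smul, hyb, mul_pow])

end GardingInequality

section Birkhoff

variable {ι : Type*} [Fintype ι] [DecidableEq ι]

theorem hadamard_self_mem_doublyStochastic (W : unitaryGroup ι ℝ) :
    W.1 ⊙ W.1 ∈ doublyStochastic ℝ ι := by
  refine mem_doublyStochastic_iff_sum.2 ⟨fun i j => mul_self_nonneg _, fun i => ?_, fun j => ?_⟩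
  · simpa [mul_apply] using congr_fun₂ (mem_unitaryGroup_iff.1 W.2) i i
  · simpa [mul_apply] using congr_fun₂ (mem_unitaryGroup_iff'.1 W.2) j j

theorem le_vecMul_dotProduct_of_forall_perm {R : Type*} [Field R] [LinearOrder R]
    [IsStrictOrderedRing R] {M : Matrix ι ι R} (hM : M ∈ doublyStochastic R ι) {v w : ι → R} {c : R}
    (hc : ∀ e : Equiv.Perm ι, c ≤ ∑ i, v i * w (e i)) : c ≤ v ᵥ* M ⬝ᵥ w := by
  have half_space : Convex R {N : Matrix ι ι R | c ≤ v ᵥ* N ⬝ᵥ w} :=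
    convex_halfSpace_ge
      ⟨fun N N' => by rw [vecMul_add, add_dotProduct],
        fun r N => by rw [vecMul_smul, smul_dotProduct]⟩ c
  rw [← SetLike.mem_coe, doublyStochastic_eq_convexHull_permMatrix] at hM
  refine convexHull_min ?_ half_space hM
  rintro _ ⟨e, rfl⟩
  rw [mem_ofPred_eq, ← dotProduct_mulVec, permMatrix_mulVec]
  exact hc e

theorem sum_conj_diagonal_mul_conj_diagonal (U V : unitaryGroup ι ℝ) (v w : ι → ℝ) :
    ∑ i, ∑ j, Unitary.conjStarAlgAut ℝ _ U (diagonal v) i j *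
        Unitary.conjStarAlgAut ℝ _ V (diagonal w) i j =
      v ᵥ* ((star U * V).1 ⊙ (star U * V).1) ⬝ᵥ w := by
  rw [dotProduct_vecMul_hadamard]
  refine (sum_hadamard_eq _ _).trans ?_
  simp only [Unitary.conjStarAlgAut_apply, Submonoid.coe_mul, Unitary.coe_star,
    star_eq_conjTranspose, conjTranspose_eq_transpose_of_trivial, transpose_mul,
    transpose_transpose, diagonal_transpose]
  simp only [Matrix.mul_assoc]
  rw [trace_mul_comm]
  simp only [Matrix.mul_assoc]

end Birkhoff

section NewtonTensor

variable {n k : ℕ} {A B : Matrix (Fin n) (Fin n) ℝ}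

theorem esymmMat_eq_esymmOn_eigenvalues (hA : A.IsHermitian) (hk : k ≤ n) :
    esymmMat k A = esymmOn Finset.univ k hA.eigenvalues := by
  have vieta := (Finset.univ.val.map hA.eigenvalues).prod_X_sub_C_coeff (k := n - k) (by simp)
  rw [Multiset.map_map] at vieta
  simp only [Multiset.card_map, Finset.card_val, Finset.card_univ, Fintype.card_fin,
    Nat.sub_sub_self hk] at vieta
  rw [esymmMat, hA.charpoly_eq]
  refine (congrArg _ vieta).trans ?_
  rw [← mul_assoc, ← mul_pow, neg_one_mul, neg_neg, one_pow, one_mul, esymmOn]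

theorem GammaPlus.eigenvalues_mem_gardingCone (hA : A.IsHermitian) (hk : k ≤ n)
    (hΓ : GammaPlus k A) : hA.eigenvalues ∈ gardingCone Finset.univ k := by
  intro j hj
  obtain rfl | hj₀ := Nat.eq_zero_or_pos j
  · simp
  · rw [← esymmMat_eq_esymmOn_eigenvalues hA (hj.trans hk)]
    exact hΓ j hj₀ hj

theorem eq_conj_diagonal_eigenvalues (hA : A.IsHermitian) :
    A = Unitary.conjStarAlgAut ℝ _ hA.eigenvectorUnitary (diagonal hA.eigenvalues) :=
  hA.spectral_theorem

theorem newtonT_eq_conj_diagonal (hA : A.IsHermitian) (hk : k ≤ n) :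
    newtonT k A = Unitary.conjStarAlgAut ℝ _ hA.eigenvectorUnitary
      (diagonal fun i => esymmOn (Finset.univ.erase i) k hA.eigenvalues) := by
  induction k with
  | zero => simp [newtonT, -Unitary.conjStarAlgAut_apply]
  | succ k ih =>
    set φ := Unitary.conjStarAlgAut ℝ _ hA.eigenvectorUnitary
    have diagonal_eq : (diagonal fun i => esymmOn (Finset.univ.erase i) (k + 1) hA.eigenvalues) =
        esymmMat (k + 1) A • 1 -
          (diagonal fun i => esymmOn (Finset.univ.erase i) k hA.eigenvalues) *
            diagonal hA.eigenvalues := by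
      rw [smul_one_eq_diagonal, diagonal_mul_diagonal, diagonal_sub]
      congr 1
      funext i
      rw [esymmMat_eq_esymmOn_eigenvalues hA hk,
        esymmOn_succ_eq_add_erase (Finset.mem_univ i) k hA.eigenvalues]
      ring
    rw [diagonal_eq, map_sub, map_smul, map_one, map_mul, ← ih (k.le_succ.trans hk),
      ← eq_conj_diagonal_eigenvalues hA, newtonT]

theorem sum_newtonT_mul_self (hA : A.IsHermitian) (hk : k + 1 ≤ n) :
    ∑ i, ∑ j, newtonT k A i j * A i j = (k + 1) * esymmMat (k + 1) A := by
  have diagonalized := sum_conj_diagonal_mul_conj_diagonal hA.eigenvectorUnitary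
    hA.eigenvectorUnitary (fun i => esymmOn (Finset.univ.erase i) k hA.eigenvalues) hA.eigenvalues
  rw [← eq_conj_diagonal_eigenvalues hA, ← newtonT_eq_conj_diagonal hA (k.le_succ.trans hk),
    Unitary.star_mul_self] at diagonalized
  rw [diagonalized, esymmMat_eq_esymmOn_eigenvalues hA hk, ← sum_mul_esymmOn_erase]
  simp [dotProduct, mul_comm, one_hadamard]

theorem mul_pow_mul_le_sum_newtonT_mul {a b : ℝ} (ha : 0 ≤ a) (hb : 0 ≤ b) (hA : A.IsHermitian)
    (hB : B.IsHermitian) (hk : k + 1 ≤ n) (hΓA : GammaPlus (k + 1) A) (hΓB : GammaPlus (k + 1) B)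
    (hAa : esymmMat (k + 1) A = a ^ (k + 1)) (hBb : esymmMat (k + 1) B = b ^ (k + 1)) :
    (k + 1) * a ^ k * b ≤ ∑ i, ∑ j, newtonT k A i j * B i j := by
  rw [esymmMat_eq_esymmOn_eigenvalues hA hk] at hAa
  rw [esymmMat_eq_esymmOn_eigenvalues hB hk] at hBb
  have diagonalized := sum_conj_diagonal_mul_conj_diagonal hA.eigenvectorUnitary
    hB.eigenvectorUnitary (fun i => esymmOn (Finset.univ.erase i) k hA.eigenvalues) hB.eigenvalues
  rw [← eq_conj_diagonal_eigenvalues hB, ← newtonT_eq_conj_diagonal hA (k.le_succ.trans hk)]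
    at diagonalized
  rw [diagonalized]
  refine le_vecMul_dotProduct_of_forall_perm (hadamard_self_mem_doublyStochastic _) fun e => ?_
  have garding := mul_pow_mul_le_sum_mul_esymmOn_erase ha hb
    (hΓA.eigenvalues_mem_gardingCone hA hk)
    (comp_equiv_mem_gardingCone e (hΓB.eigenvalues_mem_gardingCone hB hk)) hAa
    ((esymmOn_univ_comp_equiv e _ _).trans hBb)
  simpa only [Function.comp_apply, mul_comm] using garding

end NewtonTensor

section SecondDifferenceQuotient

variable {n : ℕ} (l : Fin n) (h : ℝ)

theorem ddq_sub (v w : (Fin n → ℝ) → ℝ) (x : Fin n → ℝ) :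
    ddq l h (fun y => v y - w y) x = ddq l h v x - ddq l h w x := by
  simp only [ddq]
  ring

theorem ddq_const_mul (c : ℝ) (w : (Fin n → ℝ) → ℝ) (x : Fin n → ℝ) :
    ddq l h (fun y => c * w y) x = c * ddq l h w x := by
  simp only [ddq]
  ring

theorem ddq_sum {κ : Type*} (s : Finset κ) (w : κ → (Fin n → ℝ) → ℝ) (x : Fin n → ℝ) :
    ddq l h (fun y => ∑ i ∈ s, w i y) x = ∑ i ∈ s, ddq l h (w i) x := by
  simp only [ddq, Finset.mul_sum, ← Finset.sum_sub_distrib, ← Finset.sum_add_distrib,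
    Finset.sum_div]

theorem ddq_le_ddq_of_touching {v w : (Fin n → ℝ) → ℝ} {Ω : Set (Fin n → ℝ)} {x : Fin n → ℝ}
    (hle : ∀ y ∈ Ω, v y ≤ w y) (heq : v x = w x)
    (hx : x + h • (Pi.single l 1 : Fin n → ℝ) ∈ Ω ∧ x - h • (Pi.single l 1 : Fin n → ℝ) ∈ Ω) :
    ddq l h v x ≤ ddq l h w x := by
  have forward := hle _ hx.1
  have backward := hle _ hx.2
  rw [ddq, ddq, heq]
  gcongr

theorem mul_pow_mul_ddq_le_sum_newtonT_mul_ddq {k : ℕ} (hk : k + 1 ≤ n) {Ω : Set (Fin n → ℝ)}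
    {A : (Fin n → ℝ) → Matrix (Fin n) (Fin n) ℝ} {g : (Fin n → ℝ) → ℝ}
    (hA : ∀ y ∈ Ω, (A y).IsHermitian) (hg : ∀ y ∈ Ω, 0 ≤ g y)
    (hσ : ∀ y ∈ Ω, esymmMat (k + 1) (A y) = g y ^ (k + 1))
    (hΓ : ∀ y ∈ Ω, GammaPlus (k + 1) (A y)) {x : Fin n → ℝ} (hx : x ∈ Ω)
    (hxl : x + h • (Pi.single l 1 : Fin n → ℝ) ∈ Ω ∧ x - h • (Pi.single l 1 : Fin n → ℝ) ∈ Ω) :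
    (k + 1) * g x ^ k * ddq l h g x ≤
      ∑ i, ∑ j, newtonT k (A x) i j * ddq l h (fun y => A y i j) x := by
  simp only [← ddq_const_mul, ← ddq_sum]
  refine ddq_le_ddq_of_touching l h (fun y hy => ?_) ?_ hxl
  · exact mul_pow_mul_le_sum_newtonT_mul (hg x hx) (hg y hy) (hA x hx) (hA y hy) hk (hΓ x hx)
      (hΓ y hy) (hσ x hx) (hσ y hy)
  · rw [sum_newtonT_mul_self (hA x hx) hk, hσ x hx, pow_succ, mul_assoc]

end SecondDifferenceQuotient

section Hessian

variable {n : ℕ} {u : (Fin n → ℝ) → ℝ} {x : Fin n → ℝ}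

theorem hess_apply_eq_fderiv_fderiv (hu : ContDiffAt ℝ 2 u x) (i j : Fin n) :
    hess u x i j = fderiv ℝ (fderiv ℝ u) x (Pi.single i 1) (Pi.single j 1) := by
  have differentiable_fderiv : DifferentiableAt ℝ (fderiv ℝ u) x :=
    (hu.fderiv_right (m := 1) (by norm_num)).differentiableAt (by norm_num)
  change fderiv ℝ (fun y => fderiv ℝ u y (Pi.single j 1)) x (Pi.single i 1) = _
  rw [fderiv_clm_apply differentiable_fderiv (differentiableAt_const _)]
  simp

theorem isSymm_hess (hu : ContDiffAt ℝ 2 u x) : (hess u x).IsSymm := by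
  ext i j
  rw [transpose_apply, hess_apply_eq_fderiv_fderiv hu, hess_apply_eq_fderiv_fderiv hu]
  exact (hu.isSymmSndFDerivAt (by simp)).eq _ _

end Hessian

theorem pointwise_second_difference_quotient_inequality_general
    {n k : ℕ} (hk : k ≠ 0) (hkn : k ≤ n) {Ω : Set (Fin n → ℝ)} (hΩ : IsOpen Ω)
    {g : (Fin n → ℝ) → ℝ} (hg : ∀ y ∈ Ω, 0 ≤ g y)
    {H : (Fin n → ℝ) → Matrix (Fin n) (Fin n) ℝ} (hH : ∀ y ∈ Ω, (H y).IsSymm)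
    {u : (Fin n → ℝ) → ℝ} (hu : ContDiffOn ℝ 2 u Ω)
    (heq : ∀ y ∈ Ω, esymmMat k (hess u y - H y) = g y ^ k ∧ GammaPlus k (hess u y - H y))
    {h : ℝ} (_hh : h ≠ 0) {x : Fin n → ℝ} (hx : x ∈ Ω)
    (hxl : ∀ l : Fin n, x + h • (Pi.single l 1 : Fin n → ℝ) ∈ Ω ∧
      x - h • (Pi.single l 1 : Fin n → ℝ) ∈ Ω) :
    ∑ l : Fin n, (k : ℝ) * g x ^ (k - 1) * ddq l h g x ≤
      (∑ i, ∑ j, newtonT (k - 1) (hess u x - H x) i j *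
          (∑ l : Fin n, ddq l h (fun y => hess u y i j) x))
        - ∑ l : Fin n, ∑ i, ∑ j,
            newtonT (k - 1) (hess u x - H x) i j * ddq l h (fun y => H y i j) x := by
  obtain ⟨m, rfl⟩ := Nat.exists_eq_succ_of_ne_zero hk
  have hA : ∀ y ∈ Ω, (hess u y - H y).IsHermitian := fun y hy =>
    isHermitian_iff_isSymm.2 ((isSymm_hess (hu.contDiffAt (hΩ.mem_nhds hy))).sub (hH y hy))
  calc ∑ l : Fin n, ((m + 1 : ℕ) : ℝ) * g x ^ m * ddq l h g x
      ≤ ∑ l : Fin n, ∑ i, ∑ j, newtonT m (hess u x - H x) i j *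
          ddq l h (fun y => (hess u y - H y) i j) x := by
        push_cast
        exact Finset.sum_le_sum fun l _ => mul_pow_mul_ddq_le_sum_newtonT_mul_ddq l h hkn hA
          hg (fun y hy => (heq y hy).1) (fun y hy => (heq y hy).2) hx
          (hxl l)
    _ = _ := by
        simp only [Matrix.sub_apply, ddq_sub, mul_sub, Finset.sum_sub_distrib, Finset.mul_sum]
        congr 1
        rw [Finset.sum_comm]
        exact Finset.sum_congr rfl fun i _ => Finset.sum_comm

/-- Pointwise second difference quotient inequality from concavity
(Lemma 4.1 for classical solutions). -/
theorem pointwise_second_difference_quotient_inequality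
    {n : ℕ} (hn : 3 ≤ n) (k : ℕ) (hk2 : 2 ≤ k) (hkn : k ≤ n)
    (Ω : Set (Fin n → ℝ)) (hΩ : IsOpen Ω)
    (f : ((Fin n → ℝ) × ℝ × (Fin n → ℝ)) → ℝ)
    (hfc : ContinuousOn f (Ω ×ˢ ((univ : Set ℝ) ×ˢ (univ : Set (Fin n → ℝ)))))
    (hfpos : ∀ y ∈ Ω ×ˢ ((univ : Set ℝ) ×ˢ (univ : Set (Fin n → ℝ))), 0 < f y)
    (H : ((Fin n → ℝ) × ℝ × (Fin n → ℝ)) → Matrix (Fin n) (Fin n) ℝ)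
    (hHc : ∀ i j : Fin n,
      ContinuousOn (fun y => H y i j) (Ω ×ˢ ((univ : Set ℝ) ×ˢ (univ : Set (Fin n → ℝ)))))
    (hHsymm : ∀ y ∈ Ω ×ˢ ((univ : Set ℝ) ×ˢ (univ : Set (Fin n → ℝ))), (H y).IsSymm)
    (u : (Fin n → ℝ) → ℝ) (hu : ContDiffOn ℝ 2 u Ω)
    (heq : ∀ x ∈ Ω,
      esymmMat k (hess u x - H (x, u x, grad u x)) = f (x, u x, grad u x) ^ k ∧
      GammaPlus k (hess u x - H (x, u x, grad u x)))
    (h : ℝ) (hh : h ≠ 0) (x : Fin n → ℝ) (hx : x ∈ Ω)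
    (hxl : ∀ l : Fin n, x + h • (Pi.single l 1 : Fin n → ℝ) ∈ Ω ∧
      x - h • (Pi.single l 1 : Fin n → ℝ) ∈ Ω) :
    ∑ l : Fin n, (k : ℝ) * f (x, u x, grad u x) ^ (k - 1) *
        ddq l h (fun y => f (y, u y, grad u y)) x
      ≤ (∑ i, ∑ j, newtonT (k - 1) (hess u x - H (x, u x, grad u x)) i j *
            (∑ l : Fin n, ddq l h (fun y => hess u y i j) x))
        - ∑ l : Fin n, ∑ i, ∑ j,
            newtonT (k - 1) (hess u x - H (x, u x, grad u x)) i j *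
              ddq l h (fun y => H (y, u y, grad u y) i j) x := by
  have hmem : ∀ y ∈ Ω, (y, u y, grad u y) ∈ Ω ×ˢ (univ ×ˢ univ) :=
    fun y hy => ⟨hy, trivial, trivial⟩
  exact pointwise_second_difference_quotient_inequality_general (by omega) hkn hΩ
    (fun y hy => (hfpos _ (hmem y hy)).le) (fun y hy => hHsymm _ (hmem y hy)) hu heq hh hx hxl
end
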